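/- arXiv:1411.7385 — 9 statements merged into one kernel-verified Lean document; each statement's English description precedes it below -/
import Mathlib

section
/- Fix n ≥ 1 and define β : {0,1}^n → ℝ by β(x) = 2^{1−n} − 1 if x = (1,1,…,1) and β(x) = 2^{1−n} otherwise. Then for every r ∈ {0,1}^n, the quantity f(r) = ∑_{x ∈ {0,1}^n} β(x)(−1)^{r·x} equals 2·δ_{r,0} − (−1)^{π_r}, where δ_{r,0} = 1 if r = (0,…,0) and 0 otherwise and π_r = ⊕_i r_i is the parity of r. In particular, f(r) ∈ {−1, +1} for every r. -/
/-!
Write `β = 2^{1-n} - 1_{x = (1,…,1)}`. Orthogonality of characters, `sum_neg_one_pow_dot`, evaluates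
the constant part to `2^{1-n} · 2^n δ_{r,0} = 2 δ_{r,0}`, and the indicator contributes the single
term `(-1)^{r·(1,…,1)} = (-1)^{π_r}`. When `r = 0` the value is `2 - 1 = 1`; otherwise it is
`-(-1)^{π_r} = ±1`.
-/

open Finset

/-- Orthogonality of the characters of `{0,1}^n`: the sum factors over the coordinates, and the
factor of a coordinate with `r i = 1` is `1 + (-1) = 0`. -/
lemma sum_neg_one_pow_dot {n : ℕ} (r : Fin n → Fin 2) :
    ∑ x : Fin n → Fin 2, (-1 : ℝ) ^ (∑ i : Fin n, (r i : ℕ) * (x i : ℕ)) =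
      if r = (fun _ => 0) then 2 ^ n else 0 := by
  have factor : ∑ x : Fin n → Fin 2, (-1 : ℝ) ^ (∑ i : Fin n, (r i : ℕ) * (x i : ℕ)) =
      ∏ i : Fin n, ∑ b : Fin 2, (-1 : ℝ) ^ ((r i : ℕ) * (b : ℕ)) := by
    rw [Finset.prod_univ_sum, Fintype.piFinset_univ]
    exact Finset.sum_congr rfl fun x _ => (Finset.prod_pow_eq_pow_sum _ _ _).symm
  rw [factor]
  split_ifs with h
  · subst h
    simp
  · obtain ⟨i, hi⟩ := Function.ne_iff.mp h
    refine Finset.prod_eq_zero (Finset.mem_univ i) ?_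
    have hi1 : r i = 1 := by omega
    simp [hi1]

/-- With `β(x) = 2^{1−n} − 1` if `x = (1,…,1)` and `β(x) = 2^{1−n}` otherwise,
the function `f(r) = ∑_{x ∈ {0,1}^n} β(x)(−1)^{r·x}` equals `2·δ_{r,0} − (−1)^{π_r}`,
where `π_r` is the parity of `r`; in particular `f(r) = ±1`. -/
theorem stmt1 (n : ℕ) (hn : 1 ≤ n)
    (β : (Fin n → Fin 2) → ℝ)
    (hβ : ∀ x : Fin n → Fin 2,
      β x = if x = (fun _ => 1) then (2 : ℝ) ^ ((1 : ℤ) - n) - 1 else (2 : ℝ) ^ ((1 : ℤ) - n))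
    (f : (Fin n → Fin 2) → ℝ)
    (hf : ∀ r : Fin n → Fin 2,
      f r = ∑ x : Fin n → Fin 2, β x * (-1 : ℝ) ^ (∑ i : Fin n, (r i : ℕ) * (x i : ℕ)))
    (r : Fin n → Fin 2) :
    f r = 2 * (if r = (fun _ => 0) then 1 else 0) - (-1 : ℝ) ^ (∑ i : Fin n, (r i : ℕ)) ∧
      (f r = 1 ∨ f r = -1) := by
  have key : f r =
      2 * (if r = (fun _ => 0) then 1 else 0) - (-1 : ℝ) ^ (∑ i : Fin n, (r i : ℕ)) := by
    have split : ∀ x : Fin n → Fin 2, β x * (-1 : ℝ) ^ (∑ i : Fin n, (r i : ℕ) * (x i : ℕ)) =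
        (2 : ℝ) ^ ((1 : ℤ) - n) * (-1 : ℝ) ^ (∑ i : Fin n, (r i : ℕ) * (x i : ℕ)) -
          if x = (fun _ => 1) then (-1 : ℝ) ^ (∑ i : Fin n, (r i : ℕ) * (x i : ℕ)) else 0 := by
      intro x
      rw [hβ]
      split_ifs <;> ring
    have scale : (2 : ℝ) ^ ((1 : ℤ) - n) * 2 ^ n = 2 := by
      rw [zpow_sub₀ two_ne_zero, zpow_one, zpow_natCast]
      field_simp
    rw [hf, Finset.sum_congr rfl fun x _ => split x, Finset.sum_sub_distrib, ← Finset.mul_sum,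
      sum_neg_one_pow_dot, Finset.sum_ite_eq' Finset.univ]
    split_ifs <;> simp_all
  refine ⟨key, ?_⟩
  rw [key]
  split_ifs with h
  · left
    subst h
    norm_num
  · rcases neg_one_pow_eq_or ℝ (∑ i : Fin n, (r i : ℕ)) with h1 | h1 <;> simp [h1]
end

section
/- For every n ≥ 1, the value 1 is the greatest element of the set of values 2^{1−n} ∑_{x ∈ {0,1}^n} ∏_{i=1}^n a_i(x_i) − ∏_{i=1}^n a_i(1), as (a_1,…,a_n) ranges over all families of functions a_i : {0,1} → {−1, +1}. That is, every deterministic local strategy gives value at most 1, and the value 1 is attained (e.g. when every a_i is constantly +1). -/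
/-!
The sum over settings factorises, so the first term of the Bell expression is `2 ∏ i, m i` with
`m i = (a i 0 + a i 1) / 2`. As the values are `±1`, each `m i` is either `a i 1` or `0`. Writing
`P = ∏ i, a i 1`, the Bell expression is therefore `2 P - P = P` or `0 - P = -P`, and `|P| = 1`.
-/

open Finset

/-- The sum over settings factorises over the parties, and the normalisation `2 ^ (1 - n)` turns
each factor into a mean, with one factor `2` left over. -/
lemma bell_sum_eq (n : ℕ) (a : Fin n → Fin 2 → ℝ) :
    (2 : ℝ) ^ ((1 : ℤ) - n) * (∑ x : Fin n → Fin 2, ∏ i : Fin n, a i (x i)) =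
      2 * ∏ i : Fin n, ((a i 0 + a i 1) / 2) := by
  have h : (∑ x : Fin n → Fin 2, ∏ i : Fin n, a i (x i)) = ∏ i : Fin n, (a i 0 + a i 1) := by
    have := Finset.prod_univ_sum (fun _ : Fin n => (Finset.univ : Finset (Fin 2))) a
    simpa [Fin.sum_univ_two] using this.symm
  rw [h, Finset.prod_div_distrib, zpow_sub₀ two_ne_zero]
  simp
  ring

/-- The product of the means is either the product of the values at setting `1`, or `0`. -/
lemma prod_mean_eq (n : ℕ) (a : Fin n → Fin 2 → ℝ) (ha : ∀ i b, a i b = 1 ∨ a i b = -1) :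
    ∏ i : Fin n, ((a i 0 + a i 1) / 2) = ∏ i : Fin n, a i 1 ∨
      ∏ i : Fin n, ((a i 0 + a i 1) / 2) = 0 := by
  by_cases h : ∀ i, a i 0 = a i 1
  · left
    refine Finset.prod_congr rfl fun i _ => ?_
    rw [h i]
    ring
  · right
    push Not at h
    obtain ⟨i, hi⟩ := h
    refine Finset.prod_eq_zero (Finset.mem_univ i) ?_
    rcases ha i 0 with h0 | h0 <;> rcases ha i 1 with h1 | h1 <;> simp [h0, h1] at hi ⊢

/-- The local (deterministic-strategy) bound of the Bell inequality `I_n`: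
`1` is the greatest value of `2^{1−n} ∑_{x ∈ {0,1}^n} ∏_i a_i(x_i) − ∏_i a_i(1)`
over all families of functions `a_i : {0,1} → {−1,+1}`. -/
theorem stmt2 (n : ℕ) (hn : 1 ≤ n) :
    IsGreatest
      {v : ℝ | ∃ a : Fin n → Fin 2 → ℝ,
        (∀ i b, a i b = 1 ∨ a i b = -1) ∧
        v = (2 : ℝ) ^ ((1 : ℤ) - n) * (∑ x : Fin n → Fin 2, ∏ i : Fin n, a i (x i)) -
              ∏ i : Fin n, a i 1}
      1 := by
  constructor
  · refine ⟨fun _ _ => 1, fun _ _ => Or.inl rfl, ?_⟩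
    rw [bell_sum_eq n fun _ _ => 1]
    norm_num
  · rintro v ⟨a, ha, rfl⟩
    rw [bell_sum_eq]
    have hP : |∏ i : Fin n, a i 1| = 1 := by
      rw [Finset.abs_prod]
      refine Finset.prod_eq_one fun i _ => ?_
      rcases ha i 1 with h | h <;> simp [h]
    obtain ⟨h1, h2⟩ := abs_le.mp hP.le
    rcases prod_mean_eq n a ha with h | h <;> rw [h] <;> linarith
end

section
/- For every real number φ, 2 cos⁴(φ/2) − cos(2φ) ≤ 5/3, with equality if and only if cos²(φ/2) = 2/3; in particular equality holds at φ = 2 arccos(√(2/3)). Equivalently, 5/3 is the greatest value of the function φ ↦ 2 cos⁴(φ/2) − cos(2φ) on ℝ. -/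
open Real

/-! With `x = cos²(φ/2)` the double-angle formula gives `cos φ = 2x - 1` and
`cos 2φ = 8x² - 8x + 1`, so the function equals `-6x² + 8x - 1 = 5/3 - 6 (x - 2/3)²`.
Everything follows from this completed square, the value `x = 2/3` being attained at
`φ = 2 arccos √(2/3)`. -/

/-- The completed square in `cos²(φ/2)`. -/
lemma value_eq_sub_sq (φ : ℝ) :
    2 * (Real.cos (φ / 2)) ^ 4 - Real.cos (2 * φ) =
      5 / 3 - 6 * ((Real.cos (φ / 2)) ^ 2 - 2 / 3) ^ 2 := by
  have h : Real.cos φ = 2 * Real.cos (φ / 2) ^ 2 - 1 := by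
    rw [← Real.cos_two_mul, show 2 * (φ / 2) = φ by ring]
  rw [Real.cos_two_mul, h]
  ring

/-- `5/3` is the greatest value of `φ ↦ 2 cos⁴(φ/2) − cos(2φ)` on `ℝ`, with
equality iff `cos²(φ/2) = 2/3`; in particular equality holds at
`φ = 2 arccos(√(2/3))`. -/
theorem stmt6 :
    (∀ φ : ℝ, 2 * (Real.cos (φ / 2)) ^ 4 - Real.cos (2 * φ) ≤ 5 / 3) ∧
    (∀ φ : ℝ, 2 * (Real.cos (φ / 2)) ^ 4 - Real.cos (2 * φ) = 5 / 3 ↔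
      (Real.cos (φ / 2)) ^ 2 = 2 / 3) ∧
    (2 * (Real.cos (2 * Real.arccos (Real.sqrt (2 / 3)) / 2)) ^ 4 -
        Real.cos (2 * (2 * Real.arccos (Real.sqrt (2 / 3))))) = 5 / 3 ∧
    IsGreatest (Set.range fun φ : ℝ => 2 * (Real.cos (φ / 2)) ^ 4 - Real.cos (2 * φ))
      (5 / 3) := by
  have hle : ∀ φ : ℝ, 2 * (Real.cos (φ / 2)) ^ 4 - Real.cos (2 * φ) ≤ 5 / 3 := by
    intro φ
    rw [value_eq_sub_sq]
    linarith [sq_nonneg ((Real.cos (φ / 2)) ^ 2 - 2 / 3)]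
  have hiff : ∀ φ : ℝ, 2 * (Real.cos (φ / 2)) ^ 4 - Real.cos (2 * φ) = 5 / 3 ↔
      (Real.cos (φ / 2)) ^ 2 = 2 / 3 := by
    intro φ
    rw [value_eq_sub_sq]
    constructor
    · intro h
      have h0 : ((Real.cos (φ / 2)) ^ 2 - 2 / 3) ^ 2 = 0 := by linarith
      exact sub_eq_zero.mp (pow_eq_zero_iff two_ne_zero |>.mp h0)
    · intro h
      rw [h]
      norm_num
  have hmax : 2 * (Real.cos (2 * Real.arccos (Real.sqrt (2 / 3)) / 2)) ^ 4 -
      Real.cos (2 * (2 * Real.arccos (Real.sqrt (2 / 3)))) = 5 / 3 := by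
    rw [hiff, mul_div_cancel_left₀ _ two_ne_zero, Real.cos_arccos, Real.sq_sqrt (by norm_num)]
    · linarith [Real.sqrt_nonneg (2 / 3)]
    · exact Real.sqrt_le_one.mpr (by norm_num)
  refine ⟨hle, hiff, hmax, ⟨_, hmax⟩, ?_⟩
  rintro _ ⟨φ, rfl⟩
  exact hle φ
end

section
/- For every real number φ, 2 cos⁵(φ/2) − cos(5φ/2) ≤ (2/7)·√((2/7)(94 + 11√22)), with equality when cos²(φ/2) = (6 + √22)/14. Equivalently, (2/7)·√((2/7)(94 + 11√22)) is the greatest value of the function φ ↦ 2 cos⁵(φ/2) − cos(5φ/2) on ℝ. -/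
open Real

/-!
With `c = cos (φ/2)`, the function is the odd quintic `-14c⁵ + 20c³ - 5c`. Its square is a
quintic `g` in `t = c² ∈ [0, 1]`, and the claimed maximum `M` satisfies `M² = g(t₀)`, where
`t₀ = (6 + √22)/14` is a critical point of `g`. Hence `M² - g(t) = (t - t₀)² q(t)` for a cubic `q`,
which is positive on `[0, 1]` (`cofactor_nonneg`). So the quintic is at most `M` in absolute value,
and at `c = √t₀` it is nonnegative with square `M²`, hence equal to `M`.
-/

/-- The quintuple-angle formula turns the function into a polynomial in `cos (φ/2)`. -/
lemma value_eq_quintic (φ : ℝ) : 2 * (cos (φ / 2)) ^ 5 - cos (5 * φ / 2) =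
    cos (φ / 2) * (-14 * (cos (φ / 2) ^ 2) ^ 2 + 20 * cos (φ / 2) ^ 2 - 5) := by
  have h : 5 * φ / 2 = 3 * (φ / 2) + 2 * (φ / 2) := by ring
  rw [h, cos_add, cos_three_mul, cos_two_mul, sin_three_mul, sin_two_mul]
  have hs := sin_sq_add_cos_sq (φ / 2)
  set c := cos (φ / 2)
  set s := sin (φ / 2)
  linear_combination (6 * c - 8 * c * (s ^ 2 + 1 - c ^ 2)) * hs

lemma sqrt_bounds : 4.69 < √(22 : ℝ) ∧ √(22 : ℝ) < 4.7 := by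
  constructor
  · exact Real.lt_sqrt_of_sq_lt (by norm_num)
  · rw [Real.sqrt_lt' (by norm_num)]; norm_num

/-- The cubic cofactor of `(t - t₀)²` in `M² - g(t)`, where `t₀ = (6 + s)/14` and `s = √22`,
is nonnegative on `[0, 1]`; only decimal bounds on `s` are needed. -/
lemma cofactor_nonneg {s t : ℝ} (h1 : 4.69 < s) (h2 : s < 4.7) (ht0 : 0 ≤ t) (ht1 : t ≤ 1) :
    0 ≤ -196 * t ^ 3 + (392 - 28 * s) * t ^ 2 + (44 * s - 234) * t +
      (416 - 80 * s) / 7 := by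
  -- Replacing `t³` by `t²` and `s` by its bounds leaves a quadratic of negative discriminant.
  have h3 : t ^ 3 ≤ t ^ 2 := pow_le_pow_of_le_one ht0 ht1 (by norm_num)
  have h4 : s * t ^ 2 ≤ 4.7 * t ^ 2 := by gcongr
  have h5 : 4.69 * t ≤ s * t := by gcongr
  nlinarith [sq_nonneg (t - 0.21)]

lemma max_sq : ((2 / 7) * √((2 / 7) * (94 + 11 * √22))) ^ 2 =
    (4 / 49) * ((2 / 7) * (94 + 11 * √22)) := by
  rw [mul_pow, Real.sq_sqrt (by positivity)]
  norm_num

lemma value_le_max (φ : ℝ) : 2 * (cos (φ / 2)) ^ 5 - cos (5 * φ / 2) ≤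
    (2 / 7) * √((2 / 7) * (94 + 11 * √22)) := by
  have hs : √(22 : ℝ) ^ 2 = 22 := Real.sq_sqrt (by norm_num)
  obtain ⟨h1, h2⟩ := sqrt_bounds
  have hM := max_sq
  rw [value_eq_quintic]
  refine abs_le_of_sq_le_sq' ?_ (by positivity) |>.2
  rw [hM]
  have ht1 : cos (φ / 2) ^ 2 ≤ 1 := cos_sq_le_one _
  rw [mul_pow]
  set t := cos (φ / 2) ^ 2
  have hq := mul_nonneg (sq_nonneg (t - (6 + √22) / 14))
    (cofactor_nonneg h1 h2 (sq_nonneg (cos (φ / 2))) ht1)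
  set s := √(22 : ℝ)
  -- `M² - g(t)` equals `(t - t₀)² q(t)` modulo `s² - 22`; the coefficient of `hs` is the quotient.
  linear_combination hq + ((-136/343) + (307/98) * t + (-6) * t ^ 2 + 3 * t ^ 3 +
    (-20/343) * s + (11/49) * s * t + (-1/7) * s * t ^ 2) * hs

lemma exists_value_eq_max : ∃ φ : ℝ, (cos (φ / 2)) ^ 2 = (6 + √22) / 14 ∧
    2 * (cos (φ / 2)) ^ 5 - cos (5 * φ / 2) = (2 / 7) * √((2 / 7) * (94 + 11 * √22)) := by
  have hs : √(22 : ℝ) ^ 2 = 22 := Real.sq_sqrt (by norm_num)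
  obtain ⟨h1, h2⟩ := sqrt_bounds
  have hM := max_sq
  have hc : cos (2 * arccos √((6 + √22) / 14) / 2) = √((6 + √22) / 14) := by
    rw [mul_div_cancel_left₀ _ (two_ne_zero), cos_arccos]
    · linarith [Real.sqrt_nonneg ((6 + √22) / 14)]
    · exact Real.sqrt_le_iff.2 ⟨by norm_num, by linarith⟩
  have hc2 : √((6 + √22) / 14) ^ 2 = (6 + √22) / 14 := Real.sq_sqrt (by positivity)
  refine ⟨2 * arccos √((6 + √22) / 14), by rw [hc, hc2], ?_⟩
  rw [value_eq_quintic, hc, hc2]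
  refine (sq_eq_sq₀ (mul_nonneg (Real.sqrt_nonneg _) ?_) (by positivity)).1 ?_
  · nlinarith
  · rw [hM, mul_pow, hc2]
    set s := √(22 : ℝ)
    linear_combination ((55/686) + (-19/1372) * s + (-5/1372) * s ^ 2 + (1/2744) * s ^ 3) * hs

/-- `(2/7)·√((2/7)(94 + 11√22))` is the greatest value of
`φ ↦ 2 cos⁵(φ/2) − cos(5φ/2)` on `ℝ`, with equality attained at a point where
`cos²(φ/2) = (6 + √22)/14`. -/
theorem stmt7 :
    (∀ φ : ℝ, 2 * (Real.cos (φ / 2)) ^ 5 - Real.cos (5 * φ / 2) ≤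
      (2 / 7) * Real.sqrt ((2 / 7) * (94 + 11 * Real.sqrt 22))) ∧
    (∃ φ : ℝ, (Real.cos (φ / 2)) ^ 2 = (6 + Real.sqrt 22) / 14 ∧
      2 * (Real.cos (φ / 2)) ^ 5 - Real.cos (5 * φ / 2) =
        (2 / 7) * Real.sqrt ((2 / 7) * (94 + 11 * Real.sqrt 22))) ∧
    IsGreatest (Set.range fun φ : ℝ => 2 * (Real.cos (φ / 2)) ^ 5 - Real.cos (5 * φ / 2))
      ((2 / 7) * Real.sqrt ((2 / 7) * (94 + 11 * Real.sqrt 22))) := by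
  refine ⟨value_le_max, exists_value_eq_max, ?_, ?_⟩
  · obtain ⟨φ, -, h⟩ := exists_value_eq_max
    exact ⟨φ, h⟩
  · rintro _ ⟨φ, rfl⟩
    exact value_le_max φ
end

section
/- The sequence n ↦ 2 (cos(π/n))^{n+1} − cos((n+1)π/n) converges to 3 as n → ∞. -/
/-! Since `(n + 1)π/n = π + π/n`, the subtracted cosine is `-cos (π/n) → -1`. The Bernoulli
inequality together with `cos x ≥ 1 - x²/2` gives `1 - (n + 1)(π/n)²/2 ≤ cos (π/n) ^ (n + 1) ≤ 1`,
so the power also tends to `1`, and the limit is `2 + 1 = 3`. -/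

open Real Filter

/-- The sequence `n ↦ 2 (cos(π/n))^{n+1} − cos((n+1)π/n)` converges to `3`. -/
theorem stmt8 :
    Filter.Tendsto
      (fun n : ℕ => 2 * (Real.cos (π / n)) ^ (n + 1) - Real.cos ((n + 1) * π / n))
      Filter.atTop (nhds 3) := by
  have hx : Tendsto (fun n : ℕ => π / (n : ℝ)) atTop (nhds 0) :=
    tendsto_const_div_atTop_nhds_zero_nat π
  have hcos : Tendsto (fun n : ℕ => Real.cos (π / n)) atTop (nhds 1) := by
    simpa [Function.comp_def] using (Real.continuous_cos.tendsto 0).comp hx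
  have hpow : Tendsto (fun n : ℕ => (Real.cos (π / n)) ^ (n + 1)) atTop (nhds 1) := by
    have hlow : Tendsto (fun n : ℕ => 1 - (π * (π / n) + (π / n) ^ 2) / 2) atTop (nhds 1) := by
      simpa using (((hx.const_mul π).add (hx.pow 2)).div_const 2).const_sub 1
    refine tendsto_of_tendsto_of_tendsto_of_le_of_le' hlow tendsto_const_nhds ?_ ?_
    · filter_upwards [eventually_gt_atTop 0] with n hn
      have hn0 : (n : ℝ) ≠ 0 := by positivity
      have hB := one_add_mul_le_pow (a := Real.cos (π / n) - 1)
        (by linarith [Real.neg_one_le_cos (π / n)]) (n + 1)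
      have hc := mul_le_mul_of_nonneg_left (Real.one_sub_sq_div_two_le_cos (x := π / n))
        (by positivity : (0 : ℝ) ≤ n + 1)
      have he : ((n : ℝ) + 1) * (π / n) ^ 2 = π * (π / n) + (π / n) ^ 2 := by
        field_simp
      rw [add_sub_cancel] at hB
      push_cast at hB
      linarith
    · filter_upwards with n
      refine (le_abs_self _).trans ?_
      rw [abs_pow]
      exact pow_le_one₀ (abs_nonneg _) (Real.abs_cos_le_one _)
  have hsum : Tendsto (fun n : ℕ => 2 * (Real.cos (π / n)) ^ (n + 1) + Real.cos (π / n))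
      atTop (nhds 3) := by
    convert (hpow.const_mul 2).add hcos using 2
    norm_num
  refine hsum.congr' ?_
  filter_upwards [eventually_gt_atTop 0] with n hn
  have hn0 : (n : ℝ) ≠ 0 := by positivity
  have he : ((n : ℝ) + 1) * π / n = π / n + π := by
    field_simp
    ring
  rw [he, Real.cos_add_pi, sub_neg_eq_add]
end

section
/- Let m ≥ 1 and let u_1, …, u_m : ℝ → ℝ be functions each of which is nondecreasing on the interval [−1,1], takes values in [0,1] on [−1,1], and satisfies u_i(1) = 1. Then for every ζ ∈ [−1,0], the greatest element of the set { ∏_{i=1}^m u_i(ζ_i) : ζ_1,…,ζ_m ∈ [−1,1] and ∏_{i=1}^m ζ_i = ζ } is max_{1 ≤ i ≤ m} u_i(ζ); in particular this maximum is attained by setting ζ_j = ζ for an index j maximizing u_j(ζ) and ζ_i = 1 for i ≠ j. -/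
/-! If `∏ zᵢ = ζ ≤ 0` with all `zᵢ ∈ [-1,1]`, then some factor satisfies `z_k ≤ 0`, since a
product of positive numbers is positive. As `|ζ| = ∏ |zᵢ| ≤ |z_k|`, this factor even satisfies
`z_k ≤ ζ`. Monotonicity gives `u_k(z_k) ≤ u_k(ζ)`, and all other factors of `∏ uᵢ(zᵢ)` are at
most `1`, so the product is at most `u_k(ζ) ≤ maxᵢ uᵢ(ζ)`. The bound of a product by a single
factor, used for both `|zᵢ|` and `uᵢ(zᵢ)`, is `prod_le_factor`. -/

open Finset

theorem prod_le_factor {ι : Type*} [Fintype ι] [DecidableEq ι] (f : ι → ℝ)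
    (h0 : ∀ i, 0 ≤ f i) (h1 : ∀ i, f i ≤ 1) (k : ι) : ∏ i, f i ≤ f k := by
  rw [← Finset.mul_prod_erase Finset.univ f (Finset.mem_univ k)]
  exact mul_le_of_le_one_right (h0 k)
    (Finset.prod_le_one (fun i _ => h0 i) (fun i _ => h1 i))

/-- A nonpositive product of numbers in `[-1,1]` is bounded below by one of its factors. -/
theorem exists_factor_le_prod {ι : Type*} [Fintype ι] [DecidableEq ι] (z : ι → ℝ)
    (hz : ∀ i, z i ∈ Set.Icc (-1 : ℝ) 1) (hp : ∏ i, z i ≤ 0) : ∃ k, z k ≤ ∏ i, z i := by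
  obtain ⟨k, hk⟩ : ∃ k, z k ≤ 0 := by
    by_contra! h
    exact absurd (Finset.prod_pos fun i _ => h i) (not_lt.mpr hp)
  refine ⟨k, ?_⟩
  have h := prod_le_factor (fun i => |z i|) (fun i => abs_nonneg _)
    (fun i => abs_le.mpr (hz i)) k
  rw [← Finset.abs_prod, abs_of_nonpos hp, abs_of_nonpos hk] at h
  linarith

/-- Key product lemma: if each `u_i` is nondecreasing on `[−1,1]`, takes values in
`[0,1]` there, and satisfies `u_i(1) = 1`, then for every `ζ ∈ [−1,0]` the greatest
element of `{ ∏ u_i(ζ_i) : ζ_i ∈ [−1,1], ∏ ζ_i = ζ }` is `max_i u_i(ζ)`, attained by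
setting `ζ_j = ζ` at a maximizing index and `ζ_i = 1` elsewhere. -/
theorem stmt10 (m : ℕ) (hm : 1 ≤ m) (u : Fin m → ℝ → ℝ)
    (hmono : ∀ i, MonotoneOn (u i) (Set.Icc (-1 : ℝ) 1))
    (hrange : ∀ i, ∀ y ∈ Set.Icc (-1 : ℝ) 1, u i y ∈ Set.Icc (0 : ℝ) 1)
    (hone : ∀ i, u i 1 = 1)
    (ζ : ℝ) (hζ : ζ ∈ Set.Icc (-1 : ℝ) 0) :
    ∃ j : Fin m, (∀ i, u i ζ ≤ u j ζ) ∧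
      IsGreatest
        {p : ℝ | ∃ z : Fin m → ℝ, (∀ i, z i ∈ Set.Icc (-1 : ℝ) 1) ∧
          (∏ i, z i) = ζ ∧ p = ∏ i, u i (z i)}
        (u j ζ) ∧
      (∏ i, u i (if i = j then ζ else 1)) = u j ζ := by
  have : Nonempty (Fin m) := ⟨⟨0, hm⟩⟩
  obtain ⟨j, hj⟩ := Finite.exists_max (fun i => u i ζ)
  have hζ' : ζ ∈ Set.Icc (-1 : ℝ) 1 := ⟨hζ.1, hζ.2.trans zero_le_one⟩
  have hprod : (∏ i, u i (if i = j then ζ else 1)) = u j ζ := by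
    rw [Finset.prod_eq_single j (fun i _ hij => by simp [hij, hone]) (by simp)]
    simp
  refine ⟨j, hj, ⟨⟨fun i => if i = j then ζ else 1, fun i => ?_, by simp, hprod.symm⟩, ?_⟩, hprod⟩
  · dsimp only
    split_ifs
    · exact hζ'
    · norm_num
  · rintro p ⟨z, hz, hzζ, rfl⟩
    obtain ⟨k, hk⟩ := exists_factor_le_prod z hz (hzζ.trans_le hζ.2)
    rw [hzζ] at hk
    calc ∏ i, u i (z i) ≤ u k (z k) :=
          prod_le_factor (fun i => u i (z i)) (fun i => (hrange i _ (hz i)).1)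
            (fun i => (hrange i _ (hz i)).2) k
      _ ≤ u k ζ := hmono k (hz k) hζ' hk
      _ ≤ u j ζ := hj k
end

section
/- For every ζ ∈ [−1,1], 2·(cos(arccos(ζ)/3))³ − ζ ≤ √2, and equality holds at ζ = −√2/2. Equivalently, √2 is the greatest value of the function ζ ↦ 2·(cos(arccos(ζ)/3))³ − ζ on the interval [−1,1]. -/
/-!
With `c = cos (arccos ζ / 3)`, the triple-angle formula gives `ζ = 4c³ - 3c`, so the function
equals `3c - 2c³`. Writing `s = √2/2`, one has `√2 - (3c - 2c³) = 2 (c - s)² (c + 2s)`, which is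
nonnegative because `arccos ζ / 3 ∈ [0, π/3]` forces `c ≥ 0`. Equality occurs at `c = s = cos (π/4)`,
that is, at `ζ = cos (3π/4) = -√2/2`.
-/

open Real

lemma two_cos_cube_sub_le {ζ : ℝ} (hζ : ζ ∈ Set.Icc (-1 : ℝ) 1) :
    2 * (Real.cos (Real.arccos ζ / 3)) ^ 3 - ζ ≤ Real.sqrt 2 := by
  have hc : 0 ≤ Real.cos (Real.arccos ζ / 3) := by
    apply Real.cos_nonneg_of_mem_Icc
    constructor <;> linarith [Real.arccos_nonneg ζ, Real.arccos_le_pi ζ, Real.pi_pos]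
  have h3 : ζ = 4 * Real.cos (Real.arccos ζ / 3) ^ 3 - 3 * Real.cos (Real.arccos ζ / 3) := by
    rw [← Real.cos_three_mul, mul_div_cancel₀ _ (by norm_num : (3 : ℝ) ≠ 0),
      Real.cos_arccos hζ.1 hζ.2]
  generalize Real.cos (Real.arccos ζ / 3) = c at hc h3 ⊢
  have hs : Real.sqrt 2 ^ 2 = 2 := Real.sq_sqrt (by norm_num)
  have hs0 : 0 ≤ Real.sqrt 2 := Real.sqrt_nonneg 2
  generalize Real.sqrt 2 = r at hs hs0 ⊢
  have hfac : r - (3 * c - 2 * c ^ 3) = 2 * (c - r / 2) ^ 2 * (c + r) := by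
    linear_combination (3 * c / 2 - r / 2) * hs
  have hnonneg : 0 ≤ 2 * (c - r / 2) ^ 2 * (c + r) := by positivity
  linarith

lemma two_cos_cube_sub_eq :
    2 * (Real.cos (Real.arccos (-(Real.sqrt 2 / 2)) / 3)) ^ 3 - (-(Real.sqrt 2 / 2)) =
      Real.sqrt 2 := by
  have ha : Real.arccos (-(Real.sqrt 2 / 2)) / 3 = π / 4 := by
    rw [Real.arccos_neg, ← Real.cos_pi_div_four,
      Real.arccos_cos (by positivity) (by linarith [Real.pi_pos])]
    ring
  have hs : Real.sqrt 2 ^ 2 = 2 := Real.sq_sqrt (by norm_num)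
  rw [ha, Real.cos_pi_div_four]
  linear_combination (Real.sqrt 2 / 4) * hs

/-- `√2` is the greatest value of `ζ ↦ 2·(cos(arccos(ζ)/3))³ − ζ` on `[−1,1]`,
with equality at `ζ = −√2/2`. -/
theorem stmt15 :
    (∀ ζ ∈ Set.Icc (-1 : ℝ) 1,
      2 * (Real.cos (Real.arccos ζ / 3)) ^ 3 - ζ ≤ Real.sqrt 2) ∧
    2 * (Real.cos (Real.arccos (-(Real.sqrt 2 / 2)) / 3)) ^ 3 - (-(Real.sqrt 2 / 2)) =
      Real.sqrt 2 ∧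
    IsGreatest
      ((fun ζ : ℝ => 2 * (Real.cos (Real.arccos ζ / 3)) ^ 3 - ζ) '' Set.Icc (-1 : ℝ) 1)
      (Real.sqrt 2) := by
  refine ⟨fun ζ hζ => two_cos_cube_sub_le hζ, two_cos_cube_sub_eq,
    ⟨-(Real.sqrt 2 / 2), ?_, two_cos_cube_sub_eq⟩, ?_⟩
  · rw [← Real.cos_pi_div_four]
    constructor <;> linarith [Real.cos_le_one (π / 4), Real.neg_one_le_cos (π / 4)]
  · rintro _ ⟨ζ, hζ, rfl⟩
    exact two_cos_cube_sub_le hζ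
end

section
/- The function u_2 : ℝ → ℝ defined by u_2(ζ) = (cos(arccos(ζ)/3))³ is differentiable at ζ = −√2/2 and its derivative there equals 1/2. -/
/-!
By the chain rule, for `|ζ| < 1` and `θ = arccos ζ`, the derivative of `cos³(θ/3)` is
`cos²(θ/3) sin(θ/3) / √(1 - ζ²)`. At `ζ = -√2/2` one has `θ = 3π/4`, so `θ/3 = π/4`,
and both `sin(θ/3)` and `√(1 - ζ²)` equal `√2/2`, leaving `cos²(π/4) = 1/2`.
-/

open Real

/-- The function `u₂(ζ) = (cos(arccos(ζ)/3))³` is differentiable at `ζ = −√2/2`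
with derivative `1/2` there. -/
theorem stmt16 :
    HasDerivAt (fun ζ : ℝ => (Real.cos (Real.arccos ζ / 3)) ^ 3)
      (1 / 2) (-(Real.sqrt 2 / 2)) := by
  have hs : √2 ^ 2 = (2 : ℝ) := Real.sq_sqrt (by norm_num)
  have hpos : 0 < √(2 : ℝ) := by positivity
  have harc : Real.arccos (-(√2 / 2)) / 3 = π / 4 := by
    rw [Real.arccos_neg, ← Real.cos_pi_div_four,
      Real.arccos_cos (by positivity) (by linarith [Real.pi_pos])]
    ring
  have hroot : √(1 - (-(√2 / 2)) ^ 2) = √2 / 2 := by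
    rw [show 1 - (-(√2 / 2)) ^ 2 = (√2 / 2) ^ 2 by linarith [hs]]
    exact Real.sqrt_sq (by positivity)
  have h := (((Real.hasDerivAt_arccos (x := -(√2 / 2)) (by intro h; nlinarith)
    (by intro h; nlinarith)).div_const 3).cos).pow 3
  rw [harc, hroot, Real.cos_pi_div_four, Real.sin_pi_div_four] at h
  refine h.congr_deriv ?_
  push_cast
  field_simp
  norm_num [hs]
end

section
/- The function u_2(ζ) = (cos(arccos(ζ)/3))³ is concave on the interval [−1,1]. -/
open Real

/-!
Put `c(ζ) = cos (arccos ζ / 3)`. The triple-angle formula gives `4 c³ - 3 c = ζ`, so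
`c³ = (ζ + 3 c) / 4` and it suffices that `c` is concave. Since `c` takes values in `[1/2, 1]` and
is a right inverse there of the polynomial `T(t) = 4 t³ - 3 t`, which is convex and strictly
increasing on `[1/2, ∞)`, this is the concavity of the inverse of an increasing convex function.
-/

lemma triple_cos_arccos_div_three {ζ : ℝ} (hζ : ζ ∈ Set.Icc (-1 : ℝ) 1) :
    4 * cos (arccos ζ / 3) ^ 3 - 3 * cos (arccos ζ / 3) = ζ := by
  rw [← cos_three_mul, mul_div_cancel₀ _ (by norm_num : (3 : ℝ) ≠ 0)]
  exact cos_arccos hζ.1 hζ.2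

lemma half_le_cos_arccos_div_three (ζ : ℝ) : 1 / 2 ≤ cos (arccos ζ / 3) := by
  rw [← cos_pi_div_three]
  have h0 := arccos_nonneg ζ
  have h1 := arccos_le_pi ζ
  have hpi := pi_pos
  exact cos_le_cos_of_nonneg_of_le_pi (by linarith) (by linarith) (by linarith)

/-- The function `u₂(ζ) = (cos(arccos(ζ)/3))³` is concave on `[−1,1]`. -/
theorem stmt17 :
    ConcaveOn ℝ (Set.Icc (-1 : ℝ) 1)
      (fun ζ : ℝ => (Real.cos (Real.arccos ζ / 3)) ^ 3) := by
  refine ⟨convex_Icc _ _, fun x hx y hy a b ha hb hab => ?_⟩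
  have hz := convex_Icc (-1 : ℝ) 1 hx hy ha hb hab
  have hp := triple_cos_arccos_div_three hx
  have hq := triple_cos_arccos_div_three hy
  have hr := triple_cos_arccos_div_three hz
  have hp' := half_le_cos_arccos_div_three x
  have hq' := half_le_cos_arccos_div_three y
  have hr' := half_le_cos_arccos_div_three (a • x + b • y)
  simp only [smul_eq_mul] at *
  generalize cos (arccos x / 3) = p at *
  generalize cos (arccos y / 3) = q at *
  generalize cos (arccos (a * x + b * y) / 3) = r at *
  have hcube : (a * p + b * q) ^ 3 ≤ a * p ^ 3 + b * q ^ 3 :=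
    (convexOn_pow 3).2 (show (0 : ℝ) ≤ p by linarith) (show (0 : ℝ) ≤ q by linarith) ha hb hab
  have hT : 4 * (a * p + b * q) ^ 3 - 3 * (a * p + b * q) ≤ 4 * r ^ 3 - 3 * r := by
    rw [hr]
    linear_combination 4 * hcube + a * hp + b * hq
  have hle : a * p + b * q ≤ r := by
    by_contra! h
    generalize a * p + b * q = s at *
    -- `T s - T r = (s - r) (4 (s² + s r + r²) - 3)`, positive when `s > r ≥ 1/2`
    have h1 : 0 < 4 * (s ^ 2 + s * r + r ^ 2) - 3 := by nlinarith
    nlinarith [mul_pos (sub_pos.2 h) h1]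
  linear_combination (3 / 4) * hle + (a / 4) * hp + (b / 4) * hq - (1 / 4) * hr
end
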